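/- Let W : ℕ → {a,b} be a recurrent infinite word over the two-letter alphabet {a,b}. Then the following are equivalent: (1) W is Sturmian, i.e. for every n ≥ 1 the number of distinct factors of W of length n equals n+1; (2) W is not eventually periodic and W is balanced, i.e. for any two factors u, v of W of the same length, the numbers of occurrences of the letter a in u and in v differ by at most 1. -/

import Mathlib

/-- The two-letter alphabet `{a, b}`. -/
inductive AB : Type
  | a : AB
  | b : AB
  deriving DecidableEq

/-- The finite word `u` occurs in the infinite word `W` at position `i`. -/
def occursAt {A : Type*} (W : ℕ → A) (u : List A) (i : ℕ) : Prop :=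
  u = (List.range u.length).map (fun j => W (i + j))

/-- `u` is a factor (subword) of the infinite word `W`. -/
def IsFactor {A : Type*} (W : ℕ → A) (u : List A) : Prop :=
  ∃ i, occursAt W u i

/-- `W` is recurrent: every factor occurs at infinitely many positions. -/
def Recurrent {A : Type*} (W : ℕ → A) : Prop :=
  ∀ u, IsFactor W u → ∀ N, ∃ i, N ≤ i ∧ occursAt W u i

/-- The complexity function: the number of distinct factors of `W` of length `n`. -/
noncomputable def complexity {A : Type*} (W : ℕ → A) (n : ℕ) : ℕ :=
  {u : List A | u.length = n ∧ IsFactor W u}.ncard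

/-- `W` is Sturmian: it has exactly `n + 1` factors of length `n` for all `n ≥ 1`. -/
def Sturmian (W : ℕ → AB) : Prop :=
  ∀ n, 1 ≤ n → complexity W n = n + 1

/-- `W` is eventually periodic. -/
def EventuallyPeriodic {A : Type*} (W : ℕ → A) : Prop :=
  ∃ p, 1 ≤ p ∧ ∃ N, ∀ n, N ≤ n → W (n + p) = W n

/-- `W` is balanced: occurrence counts of the letter `a` in any two factors of
the same length differ by at most `1`. -/
def BalancedWord (W : ℕ → AB) : Prop :=
  ∀ u v : List AB, IsFactor W u → IsFactor W v → u.length = v.length →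
    |(u.count AB.a : ℤ) - (v.count AB.a : ℤ)| ≤ 1

/-!
Over two letters, passing from length `n` to length `n + 1` creates one new factor for each right
special factor of length `n`, so `W` is Sturmian iff each length has exactly one right special
factor. An aperiodic word has at least one, and keeps returning to it: a stretch avoiding right
special factors is traversed deterministically, so it would become periodic as soon as some factor
repeats.

Two right special factors of the same length in a balanced word have equal tails by induction; if
their first letters differed, `a w a` and `b w b` would both be factors for some `w`. Conversely,
a shortest violation of balance has the shape `a w a`, `b w b` with `w` a palindrome. In a Sturmian
word the unique right special factor of length `|w| + 1` is then `a w` or `b w`, say `a w`, and,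
since `w` is a palindrome, `a w` cannot start inside an occurrence of `b w b`. This stretch is too
long to avoid the right special factor.
-/

section Factors

variable {A : Type*} {W : ℕ → A} {n i j : ℕ}

/-- The factor of `W` of length `n` that starts at position `i`. -/
def factorAt (W : ℕ → A) (n i : ℕ) : List A :=
  (List.range n).map fun k => W (i + k)

/-- The set of factors of `W` of length `n`, whose cardinality is `complexity W n`. -/
def factors (W : ℕ → A) (n : ℕ) : Set (List A) :=
  {u | u.length = n ∧ IsFactor W u}

@[simp]
lemma length_factorAt (W : ℕ → A) (n i : ℕ) : (factorAt W n i).length = n := by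
  simp [factorAt]

lemma factorAt_add (W : ℕ → A) (m n i : ℕ) :
    factorAt W (m + n) i = factorAt W m i ++ factorAt W n (i + m) := by
  simp [factorAt, List.range_add, add_assoc]

lemma factorAt_one (W : ℕ → A) (i : ℕ) : factorAt W 1 i = [W i] := by
  simp [factorAt]

lemma factorAt_succ (W : ℕ → A) (n i : ℕ) :
    factorAt W (n + 1) i = W i :: factorAt W n (i + 1) := by
  rw [add_comm, factorAt_add, factorAt_one, List.singleton_append]

lemma factorAt_succ' (W : ℕ → A) (n i : ℕ) :
    factorAt W (n + 1) i = factorAt W n i ++ [W (i + n)] := by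
  rw [factorAt_add, factorAt_one]

lemma factorAt_eq_iff : factorAt W n i = factorAt W n j ↔ ∀ k < n, W (i + k) = W (j + k) := by
  simp [factorAt]

lemma factorAt_succ_eq_iff :
    factorAt W (n + 1) i = factorAt W (n + 1) j ↔
      W i = W j ∧ factorAt W n (i + 1) = factorAt W n (j + 1) := by
  simp only [factorAt_succ, List.cons_eq_cons]

lemma palindrome_factorAt_iff :
    (factorAt W n i).Palindrome ↔ ∀ k l, k + l + 1 = n → W (i + k) = W (i + l) := by
  rw [List.Palindrome.iff_reverse_eq]
  constructor
  · rintro h k l rfl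
    have hk := congrArg (·[k]?) h
    simpa [factorAt, List.getElem?_reverse, eq_comm] using hk
  · intro h
    refine List.ext_getElem (by simp) fun k hk _ => ?_
    simp only [List.length_reverse, length_factorAt] at hk
    simpa [factorAt] using h (n - 1 - k) k (by omega)

lemma mem_factors_iff {u : List A} : u ∈ factors W n ↔ ∃ i, factorAt W n i = u := by
  constructor
  · rintro ⟨rfl, i, hi⟩
    exact ⟨i, hi.symm⟩
  · rintro ⟨i, rfl⟩
    refine ⟨length_factorAt W n i, i, ?_⟩
    rw [occursAt, length_factorAt, factorAt]

lemma factorAt_mem_factors (W : ℕ → A) (n i : ℕ) : factorAt W n i ∈ factors W n :=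
  mem_factors_iff.2 ⟨i, rfl⟩

lemma finite_factors [Finite A] (W : ℕ → A) (n : ℕ) : (factors W n).Finite :=
  (List.finite_length_eq A n).subset fun _ hu => hu.1

lemma mem_factors_of_cons {c : A} {u : List A} (h : c :: u ∈ factors W (n + 1)) :
    u ∈ factors W n := by
  obtain ⟨i, hi⟩ := mem_factors_iff.1 h
  rw [factorAt_succ] at hi
  exact mem_factors_iff.2 ⟨i + 1, (List.cons_eq_cons.1 hi).2⟩

lemma mem_factors_of_concat {c : A} {u : List A} (h : u ++ [c] ∈ factors W (n + 1)) :
    u ∈ factors W n := by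
  obtain ⟨i, hi⟩ := mem_factors_iff.1 h
  rw [factorAt_succ'] at hi
  exact mem_factors_iff.2 ⟨i, List.append_inj_left' hi rfl⟩

lemma ncard_factors (W : ℕ → A) (n : ℕ) : (factors W n).ncard = complexity W n :=
  rfl

lemma complexity_zero (W : ℕ → A) : complexity W 0 = 1 := by
  have h : factors W 0 = {[]} := by
    ext u
    simp [mem_factors_iff, factorAt, eq_comm]
  rw [← ncard_factors, h, Set.ncard_singleton]

lemma EventuallyPeriodic.exists_complexity_le (h : EventuallyPeriodic W) :
    ∃ C, ∀ n, complexity W n ≤ C := by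
  obtain ⟨p, hp, N, hN⟩ := h
  refine ⟨N + p, fun n => ?_⟩
  have hearly : ∀ i, factorAt W n i ∈ factorAt W n '' Set.Iio (N + p) := by
    intro i
    induction i using Nat.strong_induction_on with
    | _ i ih =>
      rcases lt_or_ge i (N + p) with hi | hi
      · exact ⟨i, hi, rfl⟩
      · have hshift : factorAt W n (i - p) = factorAt W n i := by
          refine factorAt_eq_iff.2 fun k _ => ?_
          rw [← hN (i - p + k) (by omega)]
          congr 1
          omega
        exact hshift ▸ ih (i - p) (by omega)
  have hsub : factors W n ⊆ factorAt W n '' Set.Iio (N + p) := by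
    intro u hu
    obtain ⟨i, rfl⟩ := mem_factors_iff.1 hu
    exact hearly i
  calc complexity W n
      ≤ (factorAt W n '' Set.Iio (N + p)).ncard :=
        Set.ncard_le_ncard hsub ((Set.finite_Iio _).image _)
    _ ≤ (Set.Iio (N + p)).ncard := Set.ncard_image_le (Set.finite_Iio _)
    _ = N + p := by simp [Set.ncard_eq_toFinset_card']

end Factors

section RightSpecial

variable {A : Type*} {W : ℕ → A} {n i j : ℕ}

/-- The right special factors of `W` of length `n`: those that occur in `W` followed by two
different letters. -/
def rightSpecial (W : ℕ → A) (n : ℕ) : Set (List A) :=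
  {u | ∃ c d, c ≠ d ∧ u ++ [c] ∈ factors W (n + 1) ∧ u ++ [d] ∈ factors W (n + 1)}

lemma rightSpecial_subset_factors : rightSpecial W n ⊆ factors W n :=
  fun _ ⟨_, _, _, hc, _⟩ => mem_factors_of_concat hc

lemma mem_rightSpecial_of_cons {c : A} {u : List A} (h : c :: u ∈ rightSpecial W (n + 1)) :
    u ∈ rightSpecial W n := by
  obtain ⟨d, e, hde, hd, he⟩ := h
  exact ⟨d, e, hde, mem_factors_of_cons hd, mem_factors_of_cons he⟩

lemma exists_eq_cons_of_mem_rightSpecial_succ {u : List A} (h : u ∈ rightSpecial W (n + 1)) :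
    ∃ c w, u = c :: w ∧ w ∈ rightSpecial W n := by
  obtain ⟨c, w, rfl⟩ := List.exists_cons_of_length_eq_add_one (rightSpecial_subset_factors h).1
  exact ⟨c, w, rfl, mem_rightSpecial_of_cons h⟩

lemma factorAt_mem_rightSpecial (h : factorAt W n i = factorAt W n j)
    (hne : W (i + n) ≠ W (j + n)) : factorAt W n i ∈ rightSpecial W n := by
  refine ⟨W (i + n), W (j + n), hne, ?_, ?_⟩
  · rw [← factorAt_succ']
    exact factorAt_mem_factors W _ i
  · rw [h, ← factorAt_succ']
    exact factorAt_mem_factors W _ j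

lemma factorAt_succ_eq_of_notMem_rightSpecial (hi : factorAt W n i ∉ rightSpecial W n)
    (h : factorAt W n i = factorAt W n j) : factorAt W (n + 1) i = factorAt W (n + 1) j := by
  have hnext : W (i + n) = W (j + n) := by
    by_contra hne
    exact hi (factorAt_mem_rightSpecial h hne)
  rw [factorAt_succ', factorAt_succ', h, hnext]

lemma exists_factorAt_eq_of_return {p q : ℕ} (hpq : p < q)
    (hret : factorAt W n p = factorAt W n q)
    (hspec : ∀ s, p ≤ s → s < q → factorAt W n s ∉ rightSpecial W n) (hi : p ≤ i) :
    ∃ s, p ≤ s ∧ s < q ∧ factorAt W n s = factorAt W n i := by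
  induction i, hi using Nat.le_induction with
  | base => exact ⟨p, le_rfl, hpq, rfl⟩
  | succ i _ ih =>
    obtain ⟨s, hps, hsq, hs⟩ := ih
    have hnext : factorAt W n (s + 1) = factorAt W n (i + 1) :=
      (factorAt_succ_eq_iff.1
        (factorAt_succ_eq_of_notMem_rightSpecial (hspec s hps hsq) hs)).2
    obtain hlt | rfl : s + 1 < q ∨ s + 1 = q := by omega
    · exact ⟨s + 1, by omega, hlt, hnext⟩
    · exact ⟨p, le_rfl, hpq, hret.trans hnext⟩

lemma EventuallyPeriodic.of_return {p q : ℕ} (hpq : p < q)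
    (hret : factorAt W n p = factorAt W n q)
    (hspec : ∀ s, p ≤ s → s < q → factorAt W n s ∉ rightSpecial W n) :
    EventuallyPeriodic W := by
  have hforced : ∀ i, p ≤ i → factorAt W n i ∉ rightSpecial W n := by
    intro i hi
    obtain ⟨s, hps, hsq, hs⟩ := exists_factorAt_eq_of_return hpq hret hspec hi
    exact hs ▸ hspec s hps hsq
  have hext : ∀ i, p ≤ i → factorAt W (n + 1) i = factorAt W (n + 1) (i + (q - p)) := by
    intro i hi
    refine factorAt_succ_eq_of_notMem_rightSpecial (hforced i hi) ?_
    induction i, hi using Nat.le_induction with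
    | base => rwa [Nat.add_sub_cancel' hpq.le]
    | succ i hi ih =>
      rw [add_right_comm]
      exact (factorAt_succ_eq_iff.1
        (factorAt_succ_eq_of_notMem_rightSpecial (hforced i hi) ih)).2
  exact ⟨q - p, by omega, p, fun i hi => (factorAt_succ_eq_iff.1 (hext i hi)).1.symm⟩

lemma exists_factorAt_mem_rightSpecial [Finite A] (hW : ¬ EventuallyPeriodic W) (n j : ℕ) :
    ∃ s ≤ (factors W n \ rightSpecial W n).ncard, factorAt W n (j + s) ∈ rightSpecial W n := by
  by_contra! havoid
  set N := (factors W n \ rightSpecial W n).ncard with hN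
  obtain ⟨s, hs, t, ht, hst, heq⟩ := Set.exists_ne_map_eq_of_ncard_lt_of_maps_to
    (s := Set.Iic N) (t := factors W n \ rightSpecial W n) (f := fun s => factorAt W n (j + s))
    (by simp [← hN, Set.ncard_eq_toFinset_card'])
    (fun s hs => ⟨factorAt_mem_factors W n _, havoid s hs⟩)
    ((finite_factors W n).subset Set.sdiff_subset)
  wlog hlt : s < t generalizing s t
  · exact this t ht s hs hst.symm heq.symm (lt_of_le_of_ne (not_lt.1 hlt) hst.symm)
  refine hW (.of_return (p := j + s) (q := j + t) (by omega) heq fun r hr hrt => ?_)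
  obtain ⟨k, rfl⟩ := Nat.exists_eq_add_of_le ((Nat.le_add_right j s).trans hr)
  exact havoid k (le_trans (by omega) (Set.mem_Iic.1 ht))

end RightSpecial

section PalindromePair

variable {A : Type*} {W : ℕ → A} {n i j : ℕ}

/-- The factors of `W` of length `n + 2` at positions `i` and `j` have the form `c w c` and `d w d`,
for a palindrome `w` of length `n` and letters `c ≠ d`. That `w` is a palindrome is recorded through
the two surrounding words. -/
structure IsPalindromePair (W : ℕ → A) (n i j : ℕ) : Prop where
  ne : W i ≠ W j
  inner_eq : factorAt W n (i + 1) = factorAt W n (j + 1)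
  left : (factorAt W (n + 2) i).Palindrome
  right : (factorAt W (n + 2) j).Palindrome

namespace IsPalindromePair

lemma symm (h : IsPalindromePair W n i j) : IsPalindromePair W n j i :=
  ⟨h.ne.symm, h.inner_eq.symm, h.right, h.left⟩

lemma inner_mem_rightSpecial (h : IsPalindromePair W n i j) :
    factorAt W n (i + 1) ∈ rightSpecial W n := by
  refine factorAt_mem_rightSpecial h.inner_eq ?_
  have hi : W i = W (i + (n + 1)) := palindrome_factorAt_iff.1 h.left 0 (n + 1) (by omega)
  have hj : W j = W (j + (n + 1)) := palindrome_factorAt_iff.1 h.right 0 (n + 1) (by omega)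
  rw [add_right_comm, add_right_comm j]
  exact hi ▸ hj ▸ h.ne

lemma factorAt_ne (h : IsPalindromePair W n i j) {s : ℕ} (hs : s ≤ n + 1) :
    factorAt W (n + 1) (j + s) ≠ factorAt W (n + 1) i := by
  intro heq
  have hpal := palindrome_factorAt_iff.1 h.right
  have hhead : W (j + s) = W i := (factorAt_succ_eq_iff.1 heq).1
  obtain rfl | hs0 := Nat.eq_zero_or_pos s
  · exact h.ne hhead.symm
  obtain ⟨t, ht⟩ := Nat.exists_eq_add_of_le hs
  have hmirror : W (j + t) = W i := (hpal t s (by omega)).trans hhead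
  obtain _ | t := t
  · exact h.ne hmirror.symm
  refine h.ne ?_
  calc W i = W (j + (t + 1)) := hmirror.symm
    _ = W (i + (t + 1)) := by
      simpa only [add_assoc, add_comm 1] using (factorAt_eq_iff.1 h.inner_eq t (by omega)).symm
    _ = W (j + s + (t + 1)) := (factorAt_eq_iff.1 heq (t + 1) (by omega)).symm
    _ = W (j + (n + 1)) := by rw [add_assoc, ← ht]
    _ = W j := hpal (n + 1) 0 (by omega)

end IsPalindromePair

end PalindromePair

section Binary

variable {W : ℕ → AB} {n i j : ℕ}

instance : Fintype AB where
  elems := {AB.a, AB.b}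
  complete := by rintro (_ | _) <;> simp

lemma AB.eq_or_eq_of_ne {c d : AB} (h : c ≠ d) (e : AB) : e = c ∨ e = d := by
  revert c d e
  decide

lemma mem_rightSpecial_iff_forall {u : List AB} :
    u ∈ rightSpecial W n ↔ ∀ c, u ++ [c] ∈ factors W (n + 1) := by
  constructor
  · rintro ⟨c, d, hcd, hc, hd⟩ e
    obtain rfl | rfl := AB.eq_or_eq_of_ne hcd e
    exacts [hc, hd]
  · exact fun h => ⟨AB.a, AB.b, by decide, h AB.a, h AB.b⟩

lemma complexity_succ (W : ℕ → AB) (n : ℕ) :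
    complexity W (n + 1) = complexity W n + (rightSpecial W n).ncard := by
  let E (c : AB) : Set (List AB) := {u | u ++ [c] ∈ factors W (n + 1)}
  have hfin (c : AB) : (E c).Finite :=
    (finite_factors W n).subset fun _ => mem_factors_of_concat
  have hunion : factors W n = E AB.a ∪ E AB.b := by
    refine Set.Subset.antisymm (fun u hu => ?_)
      (Set.union_subset (fun _ => mem_factors_of_concat) fun _ => mem_factors_of_concat)
    obtain ⟨i, rfl⟩ := mem_factors_iff.1 hu
    have hext : factorAt W n i ∈ E (W (i + n)) :=
      mem_factors_iff.2 ⟨i, factorAt_succ' W n i⟩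
    cases hc : W (i + n)
    · exact .inl (hc ▸ hext)
    · exact .inr (hc ▸ hext)
  have hinter : rightSpecial W n = E AB.a ∩ E AB.b := by
    ext u
    rw [mem_rightSpecial_iff_forall]
    exact ⟨fun h => ⟨h _, h _⟩, fun h c => by cases c; exacts [h.1, h.2]⟩
  have hsucc : factors W (n + 1) = (· ++ [AB.a]) '' E AB.a ∪ (· ++ [AB.b]) '' E AB.b := by
    refine Set.Subset.antisymm (fun u hu => ?_) (Set.union_subset ?_ ?_)
    · obtain ⟨i, rfl⟩ := mem_factors_iff.1 hu
      rw [factorAt_succ'] at hu ⊢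
      cases hc : W (i + n)
      · exact .inl ⟨_, hc ▸ hu, rfl⟩
      · exact .inr ⟨_, hc ▸ hu, rfl⟩
    all_goals exact Set.image_subset_iff.2 fun _ hu => hu
  have hdisj : Disjoint ((· ++ [AB.a]) '' E AB.a) ((· ++ [AB.b]) '' E AB.b) := by
    rw [Set.disjoint_left]
    rintro _ ⟨u, _, rfl⟩ ⟨v, _, hv⟩
    simpa using List.append_inj_right' hv rfl
  rw [← ncard_factors, ← ncard_factors, hsucc, hunion, hinter,
    Set.ncard_union_add_ncard_inter _ _ (hfin _) (hfin _),
    Set.ncard_union_eq hdisj ((hfin _).image _) ((hfin _).image _),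
    Set.ncard_image_of_injective _ (List.append_left_injective _),
    Set.ncard_image_of_injective _ (List.append_left_injective _)]

namespace Sturmian

lemma complexity_eq (h : Sturmian W) (n : ℕ) : complexity W n = n + 1 := by
  obtain rfl | hn := Nat.eq_zero_or_pos n
  · exact complexity_zero W
  · exact h n hn

lemma not_eventuallyPeriodic (h : Sturmian W) : ¬ EventuallyPeriodic W := by
  intro hper
  obtain ⟨C, hC⟩ := hper.exists_complexity_le
  have := hC C
  rw [h.complexity_eq] at this
  omega

lemma exists_rightSpecial_eq_singleton (h : Sturmian W) (n : ℕ) :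
    ∃ u, rightSpecial W n = {u} := by
  have := complexity_succ W n
  rw [h.complexity_eq, h.complexity_eq] at this
  exact Set.ncard_eq_one.1 (by omega)

lemma exists_factorAt_eq (h : Sturmian W) {u : List AB} (hu : u ∈ rightSpecial W n) (j : ℕ) :
    ∃ s ≤ n, factorAt W n (j + s) = u := by
  obtain ⟨v, hv⟩ := h.exists_rightSpecial_eq_singleton n
  obtain rfl : u = v := by rwa [hv] at hu
  have hcard : (factors W n \ rightSpecial W n).ncard = n := by
    rw [hv, Set.ncard_sdiff_singleton_of_mem (rightSpecial_subset_factors hu), ncard_factors,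
      h.complexity_eq, Nat.add_sub_cancel]
  obtain ⟨s, hs, hmem⟩ := exists_factorAt_mem_rightSpecial h.not_eventuallyPeriodic n j
  exact ⟨s, hs.trans_eq hcard, by rwa [hv] at hmem⟩

lemma factorAt_notMem_rightSpecial (h : Sturmian W) (hpair : IsPalindromePair W n i j) :
    factorAt W (n + 1) i ∉ rightSpecial W (n + 1) := by
  intro hmem
  obtain ⟨s, hs, heq⟩ := h.exists_factorAt_eq hmem j
  exact hpair.factorAt_ne hs heq

lemma not_isPalindromePair (h : Sturmian W) (n i j : ℕ) : ¬ IsPalindromePair W n i j := by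
  intro hpair
  obtain ⟨u, hu⟩ := h.exists_rightSpecial_eq_singleton (n + 1)
  have hmem : u ∈ rightSpecial W (n + 1) := hu ▸ Set.mem_singleton u
  obtain ⟨c, w, rfl, hw⟩ := exists_eq_cons_of_mem_rightSpecial_succ hmem
  have hinner : w = factorAt W n (i + 1) := by
    obtain ⟨v, hv⟩ := h.exists_rightSpecial_eq_singleton n
    have hi := hpair.inner_mem_rightSpecial
    rw [hv] at hw hi
    exact hw.trans hi.symm
  obtain rfl | rfl := AB.eq_or_eq_of_ne hpair.ne c
  · rw [hinner, ← factorAt_succ] at hmem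
    exact h.factorAt_notMem_rightSpecial hpair hmem
  · rw [hinner, hpair.inner_eq, ← factorAt_succ] at hmem
    exact h.factorAt_notMem_rightSpecial hpair.symm hmem

end Sturmian

end Binary

section Balance

variable {W : ℕ → AB} {n i j : ℕ}

/-- The number of letters `a` among the `n` letters of `W` from position `i` on. -/
def aCount (W : ℕ → AB) (n i : ℕ) : ℕ :=
  (factorAt W n i).count AB.a

lemma aCount_add (W : ℕ → AB) (m n i : ℕ) :
    aCount W (m + n) i = aCount W m i + aCount W n (i + m) := by
  simp only [aCount, factorAt_add, List.count_append]

lemma aCount_one_inj : aCount W 1 i = aCount W 1 j ↔ W i = W j := by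
  rw [aCount, aCount, factorAt_one, factorAt_one]
  cases W i <;> cases W j <;> decide

lemma balancedWord_iff : BalancedWord W ↔ ∀ n i j, aCount W n i ≤ aCount W n j + 1 := by
  constructor
  · intro h n i j
    have := h _ _ (factorAt_mem_factors W n i).2 (factorAt_mem_factors W n j).2 (by simp)
    rw [abs_le] at this
    unfold aCount
    omega
  · intro h u v hu hv huv
    generalize hn : v.length = n at huv
    obtain ⟨i, rfl⟩ := mem_factors_iff.1 (⟨huv, hu⟩ : u ∈ factors W n)
    obtain ⟨j, rfl⟩ := mem_factors_iff.1 (⟨hn, hv⟩ : v ∈ factors W n)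
    have hij := h n i j
    have hji := h n j i
    unfold aCount at hij hji
    rw [abs_le]
    omega

lemma palindrome_factorAt_of_aCount_eq
    (h : ∀ k l, k + l = n → aCount W k i = aCount W k (i + l)) :
    (factorAt W n i).Palindrome := by
  rw [palindrome_factorAt_iff]
  intro k l hkl
  have hshort := h k (l + 1) (by omega)
  have hlong := h (k + 1) l (by omega)
  rw [aCount_add, add_comm k 1, aCount_add, add_assoc] at hlong
  exact aCount_one_inj.1 (by omega)

/-- The factors of length `n` at positions `i` and `j` violate balance, with more letters `a` at
`i`, and no two factors of a smaller length do. -/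
structure IsMinimalImbalance (W : ℕ → AB) (n i j : ℕ) : Prop where
  gap : aCount W n j + 2 ≤ aCount W n i
  balanced_of_lt : ∀ k < n, ∀ i j, aCount W k i ≤ aCount W k j + 1

namespace IsMinimalImbalance

lemma exists_of_not_balancedWord (h : ¬ BalancedWord W) : ∃ n i j, IsMinimalImbalance W n i j := by
  classical
  have hex : ∃ n i j, aCount W n j + 2 ≤ aCount W n i := by
    rw [balancedWord_iff] at h
    push Not at h
    exact h
  obtain ⟨i, j, hgap⟩ := Nat.find_spec hex
  refine ⟨Nat.find hex, i, j, hgap, fun k hk i j => ?_⟩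
  have := Nat.find_min hex hk
  push Not at this
  exact Nat.le_of_lt_succ (this i j)

lemma two_le (h : IsMinimalImbalance W n i j) : 2 ≤ n := by
  have hle : aCount W n i ≤ n := List.count_le_length.trans_eq (length_factorAt W n i)
  have := h.gap
  omega

lemma aCount_split (h : IsMinimalImbalance W n i j) {k l : ℕ} (hk : 0 < k) (hl : 0 < l)
    (hn : k + l = n) :
    aCount W k i = aCount W k j + 1 ∧ aCount W l (i + k) = aCount W l (j + k) + 1 := by
  have hgap := h.gap
  rw [← hn, aCount_add, aCount_add] at hgap
  have hprefix := h.balanced_of_lt k (by omega) i j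
  have hsuffix := h.balanced_of_lt l (by omega) (i + k) (j + k)
  omega

lemma aCount_prefix_eq_suffix (h : IsMinimalImbalance W n i j) {k l : ℕ} (hn : k + l = n) :
    aCount W k i = aCount W k (i + l) ∧ aCount W k j = aCount W k (j + l) := by
  obtain rfl | hk := Nat.eq_zero_or_pos k
  · exact ⟨rfl, rfl⟩
  obtain rfl | hl := Nat.eq_zero_or_pos l
  · exact ⟨rfl, rfl⟩
  have hprefix := (h.aCount_split hk hl hn).1
  have hsuffix := (h.aCount_split hl hk (by omega)).2
  have hcross := h.balanced_of_lt k (by omega) i (j + l)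
  have hcross' := h.balanced_of_lt k (by omega) (i + l) j
  omega

lemma isPalindromePair (h : IsMinimalImbalance W (n + 2) i j) : IsPalindromePair W n i j where
  ne heq := by
    have hfirst := (h.aCount_split one_pos n.succ_pos (by omega)).1
    rw [aCount_one_inj.2 heq] at hfirst
    omega
  inner_eq := by
    refine factorAt_eq_iff.2 fun k hk => aCount_one_inj.1 ?_
    have hshort := (h.aCount_split (k := 1 + k) (l := n - k + 1) (by omega) (by omega) (by omega)).1
    have hlong := (h.aCount_split (k := 1 + k + 1) (l := n - k) (by omega) (by omega) (by omega)).1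
    rw [aCount_add W (1 + k), aCount_add W (1 + k), ← add_assoc, ← add_assoc] at hlong
    omega
  left := palindrome_factorAt_of_aCount_eq fun _ _ hkl => (h.aCount_prefix_eq_suffix hkl).1
  right := palindrome_factorAt_of_aCount_eq fun _ _ hkl => (h.aCount_prefix_eq_suffix hkl).2

end IsMinimalImbalance

lemma Sturmian.balancedWord (h : Sturmian W) : BalancedWord W := by
  by_contra hbal
  obtain ⟨n, i, j, hmin⟩ := IsMinimalImbalance.exists_of_not_balancedWord hbal
  obtain ⟨m, rfl⟩ := Nat.exists_eq_add_of_le' hmin.two_le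
  exact h.not_isPalindromePair m i j hmin.isPalindromePair

namespace BalancedWord

lemma notMem_factors (h : BalancedWord W) {w : List AB}
    (ha : AB.a :: w ++ [AB.a] ∈ factors W n) : AB.b :: w ++ [AB.b] ∉ factors W n := by
  intro hb
  have hdiff := (abs_le.1 (h _ _ ha.2 hb.2 (by simp))).2
  have hcount : (AB.a :: w ++ [AB.a]).count AB.a = (AB.b :: w ++ [AB.b]).count AB.a + 2 := by
    simp
  omega

lemma subsingleton_rightSpecial (h : BalancedWord W) (n : ℕ) :
    (rightSpecial W n).Subsingleton := by
  induction n with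
  | zero =>
    intro u hu v hv
    rw [List.eq_nil_of_length_eq_zero (rightSpecial_subset_factors hu).1,
      List.eq_nil_of_length_eq_zero (rightSpecial_subset_factors hv).1]
  | succ n ih =>
    intro u hu v hv
    obtain ⟨c, w, rfl, hw⟩ := exists_eq_cons_of_mem_rightSpecial_succ hu
    obtain ⟨d, w', rfl, hw'⟩ := exists_eq_cons_of_mem_rightSpecial_succ hv
    obtain rfl : w = w' := ih hw hw'
    rw [mem_rightSpecial_iff_forall] at hu hv
    cases c <;> cases d
    · rfl
    · exact absurd (hv AB.b) (h.notMem_factors (hu AB.a))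
    · exact absurd (hu AB.b) (h.notMem_factors (hv AB.a))
    · rfl

lemma sturmian (h : BalancedWord W) (hW : ¬ EventuallyPeriodic W) : Sturmian W := by
  have hcard (n : ℕ) : (rightSpecial W n).ncard = 1 := by
    obtain ⟨s, -, hs⟩ := exists_factorAt_mem_rightSpecial hW n 0
    exact Set.ncard_eq_one.2 ⟨_, (h.subsingleton_rightSpecial n).eq_singleton_of_mem hs⟩
  have hcomplexity (n : ℕ) : complexity W n = n + 1 := by
    induction n with
    | zero => exact complexity_zero W
    | succ n ih => rw [complexity_succ, ih, hcard]
  exact fun n _ => hcomplexity n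

end BalancedWord

end Balance

theorem sturmian_iff_balanced_nonperiodic_general (W : ℕ → AB) :
    Sturmian W ↔ (¬ EventuallyPeriodic W ∧ BalancedWord W) :=
  ⟨fun h => ⟨h.not_eventuallyPeriodic, h.balancedWord⟩, fun ⟨hW, h⟩ => h.sturmian hW⟩

/-- A recurrent binary word is Sturmian iff it is non-(eventually-)periodic and balanced. -/
theorem sturmian_iff_balanced_nonperiodic (W : ℕ → AB) (hrec : Recurrent W) :
    Sturmian W ↔ (¬ EventuallyPeriodic W ∧ BalancedWord W) :=
  sturmian_iff_balanced_nonperiodic_general W
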